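/- Let k be a field, V a k-vector space, and V₁,…,V_N subspaces of V. Then there exist a basis E of V and pairwise disjoint subsets E₁,…,E_N ⊆ E such that ⋂_{j=1}^N V_j = span(E \ (E₁ ∪ ⋯ ∪ E_N)) and V_j ⊆ span(E \ E_j) for every 1 ≤ j ≤ N. -/

import Mathlib

open Module

universe u

/-- A linear surjection onto a coordinate space whose kernel is a given finite intersection of
subspaces, such that each coordinate is coloured by one of the subspaces on which it vanishes. -/
theorem exists_surjective_finsupp_ker_eq_iInf {k : Type*} {V : Type u} {J : Type*} [Field k]
    [AddCommGroup V] [Module k V] (W : J → Submodule k V) (s : Finset J) :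
    ∃ (ι : Type u) (c : ι → J) (P : V →ₗ[k] ι →₀ k), Function.Surjective P ∧
      LinearMap.ker P = ⨅ j ∈ s, W j ∧ ∀ i, ∀ v ∈ W (c i), P v i = 0 := by
  classical
  induction s using Finset.induction_on with
  | empty =>
    exact ⟨PEmpty, PEmpty.elim, 0, fun x => ⟨0, Subsingleton.elim _ _⟩, by simp,
      fun i => i.elim⟩
  | insert j s _ ih =>
    obtain ⟨ι, c, P, hP, hker, hc⟩ := ih
    let U := (LinearMap.ker P).map (W j).mkQ
    obtain ⟨p, hp⟩ := U.subtype.exists_leftInverse_of_injective U.ker_subtype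
    let b := Basis.ofVectorSpace k U
    let q : V →ₗ[k] U := p ∘ₗ (W j).mkQ
    have hq : ∀ v (hv : v ∈ LinearMap.ker P), q v = ⟨(W j).mkQ v, Submodule.mem_map_of_mem hv⟩ :=
      fun v hv => LinearMap.congr_fun hp ⟨(W j).mkQ v, Submodule.mem_map_of_mem hv⟩
    let e := (Finsupp.sumFinsuppLEquivProdFinsupp k
      (α := ι) (β := Basis.ofVectorSpaceIndex k U) (M := k)).symm
    refine ⟨ι ⊕ _, Sum.elim c fun _ => j,
      e.toLinearMap ∘ₗ P.prod (b.repr.toLinearMap ∘ₗ q), ?_, ?_, ?_⟩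
    · refine e.surjective.comp ?_
      rintro ⟨x, y⟩
      obtain ⟨v, rfl⟩ := hP x
      obtain ⟨u, hu, huv⟩ := (b.repr.symm y - q v).2
      refine ⟨v + u, ?_⟩
      have hqu : q u = b.repr.symm y - q v := (hq u hu).trans (Subtype.ext huv)
      have hPu : P u = 0 := hu
      simp [hPu, hqu]
    · rw [Finset.iInf_insert, ← hker]
      ext v
      have h : v ∈ LinearMap.ker P → (q v = 0 ↔ v ∈ W j) := fun hv => by
        rw [hq v hv]
        exact (Submodule.mk_eq_zero _ _).trans (Submodule.Quotient.mk_eq_zero _)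
      simp only [LinearMap.mem_ker, Submodule.mem_inf] at h ⊢
      simp only [LinearMap.comp_apply, LinearMap.prod_apply, Function.prod, LinearEquiv.coe_coe,
        LinearEquiv.map_eq_zero_iff, Prod.mk_eq_zero]
      tauto
    · rintro (i | i) v hv
      · simpa [e] using hc i v hv
      · have : q v = 0 := by
          simp [q, (Submodule.Quotient.mk_eq_zero (W j)).2 hv]
        simp [e, this]

/-- A linear surjection onto a coordinate space extends to a coordinate system of the source. -/
theorem exists_basis_sum_ker_of_surjective {k : Type*} {V : Type u} {ι : Type*} [Field k]
    [AddCommGroup V] [Module k V] (P : V →ₗ[k] ι →₀ k) (hP : Function.Surjective P) :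
    ∃ (κ : Type u) (b : Basis (κ ⊕ ι) k V), ∀ v i, b.repr v (Sum.inr i) = P v i := by
  obtain ⟨f, hf⟩ := (LinearMap.ker P).subtype.exists_leftInverse_of_injective
    (LinearMap.ker P).ker_subtype
  have hf' : ∀ x (hx : P x = 0), f x = ⟨x, hx⟩ := fun x hx => LinearMap.congr_fun hf ⟨x, hx⟩
  have hbij : Function.Bijective (f.prod P) := by
    constructor
    · rw [← LinearMap.ker_eq_bot, LinearMap.ker_eq_bot']
      intro v hv
      obtain ⟨h1, h2⟩ := Prod.mk_eq_zero.1 hv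
      exact congrArg Subtype.val ((hf' v h2).symm.trans h1)
    · rintro ⟨x, y⟩
      obtain ⟨v, rfl⟩ := hP y
      have hz : P ((x - f v : LinearMap.ker P) : V) = 0 := (x - f v).2
      refine ⟨v + (x - f v : LinearMap.ker P), ?_⟩
      refine Prod.ext ?_ ?_
      · change f (v + _) = x
        rw [map_add, hf' _ hz]
        exact add_sub_cancel _ _
      · change P (v + _) = P v
        rw [map_add, hz, add_zero]
  let b := ((Basis.ofVectorSpace k (LinearMap.ker P)).prod
    (Finsupp.basisSingleOne (R := k) (ι := ι))).map (LinearEquiv.ofBijective _ hbij).symm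
  refine ⟨_, b, fun v i => ?_⟩
  simp [b]

/-- **Mutual transversality via a basis.** Given subspaces `V₁,…,V_N` of a
`k`-vector space `V`, there exist a basis `E` of `V` and pairwise disjoint
subsets `E₁,…,E_N ⊆ E` such that `⋂_j V_j = span(E \ ⋃_j E_j)` and
`V_j ⊆ span(E \ E_j)` for each `j`. -/
theorem subspaces_transverse_basis {k V : Type*} [Field k] [AddCommGroup V]
    [Module k V] (N : ℕ) (Vs : Fin N → Submodule k V) :
    ∃ (E : Set V) (Es : Fin N → Set V),
      LinearIndependent k ((↑) : E → V) ∧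
      Submodule.span k E = ⊤ ∧
      (∀ j, Es j ⊆ E) ∧
      Pairwise (Function.onFun Disjoint Es) ∧
      (⨅ j, Vs j) = Submodule.span k (E \ ⋃ j, Es j) ∧
      ∀ j, Vs j ≤ Submodule.span k (E \ Es j) := by
  obtain ⟨ι, c, P, hP, hker, hc⟩ := exists_surjective_finsupp_ker_eq_iInf Vs Finset.univ
  obtain ⟨κ, b, hb⟩ := exists_basis_sum_ker_of_surjective P hP
  have hdiff : ∀ s, Set.range b \ b '' s = b '' sᶜ := fun s => by
    rw [← Set.image_univ, ← Set.image_sdiff b.injective, Set.compl_eq_univ_sdiff]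
  refine ⟨Set.range b, fun j => b '' (Sum.inr '' (c ⁻¹' {j})), b.linearIndependent.linearIndepOn_id,
    b.span_eq, fun j => Set.image_subset_range _ _, fun i j hij => ?_, ?_, fun j v hv => ?_⟩
  · exact (Set.disjoint_image_iff b.injective).2 <|
      (Set.disjoint_image_iff Sum.inr_injective).2 <|
        Disjoint.preimage c (Set.disjoint_singleton.2 hij)
  · rw [← Set.image_iUnion, hdiff]
    ext v
    have hv : v ∈ ⨅ j, Vs j ↔ P v = 0 := by
      rw [← LinearMap.mem_ker, hker]
      simp
    rw [hv, b.mem_span_image]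
    constructor
    · intro h x hx hmem
      obtain ⟨j, i, -, rfl⟩ := Set.mem_iUnion.1 hmem
      exact Finsupp.mem_support_iff.1 hx (by rw [hb, h, Finsupp.zero_apply])
    · intro h
      ext i
      by_contra hi
      refine h (Finsupp.mem_support_iff.2 ((hb v i).trans_ne hi)) ?_
      exact Set.mem_iUnion.2 ⟨c i, i, rfl, rfl⟩
  · rw [hdiff, b.mem_span_image]
    rintro x hx ⟨i, rfl, rfl⟩
    exact Finsupp.mem_support_iff.1 hx ((hb v i).trans (hc i v hv))
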